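/- Let C ⊆ F_{q^m}^n be an arbitrary (not necessarily linear) code with at least two elements and let t, ρ be nonnegative integers. (i) If d_R(C) > 2t + ρ, then for every positive integer N, every matrix A ∈ F_q^{N×n} with rank(A) ≥ n − ρ, all c, c' ∈ C and all e, e' ∈ F_{q^m}^N with wt_R(e) ≤ t and wt_R(e') ≤ t: if c A^T + e = c' A^T + e', then c = c' (so the minimum-discrepancy decoder is infallible against t errors and ρ erasures). (ii) Conversely, if d_R(C) ≤ 2t + ρ and ρ ≤ n, then there exist a positive integer N, a matrix A ∈ F_q^{N×n} with rank(A) = n − ρ, distinct c, c' ∈ C, and e, e' ∈ F_{q^m}^N with wt_R(e) ≤ t and wt_R(e') ≤ t such that c A^T + e = c' A^T + e'. -/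

import Mathlib

open Submodule Module

namespace RankPaper

variable {n : ℕ}

/-- The coordinatewise `q^i`-th power map on `Fqm^n`. -/
def qpowMap (q i : ℕ) {Fqm : Type} [Field Fqm] (v : Fin n → Fqm) : Fin n → Fqm :=
  fun j => v j ^ q ^ i

/-- The Galois closure `D* = Σ_{i=0}^{m-1} D^{q^i}` of a subspace (as the span of the
union of the images of `D` under the coordinatewise `q^i`-power maps, `0 ≤ i < m`). -/
def galClosure (q m : ℕ) {Fqm : Type} [Field Fqm] (D : Submodule Fqm (Fin n → Fqm)) :
    Submodule Fqm (Fin n → Fqm) :=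
  Submodule.span Fqm (⋃ i ∈ Finset.range m, qpowMap q i '' (D : Set (Fin n → Fqm)))

/-- `D` is Galois closed if `D = D*`. -/
def GaloisClosed (q m : ℕ) {Fqm : Type} [Field Fqm] (D : Submodule Fqm (Fin n → Fqm)) : Prop :=
  galClosure q m D = D

/-- Rank weight of a subspace: `wt_R(D) = dim_{Fqm} D*`. -/
noncomputable def wtR (q m : ℕ) {Fqm : Type} [Field Fqm]
    (D : Submodule Fqm (Fin n → Fqm)) : ℕ :=
  finrank Fqm (galClosure q m D)

/-- Rank weight of a vector: `wt_R(c) = wt_R(span {c})`. -/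
noncomputable def wtRv (q m : ℕ) {Fqm : Type} [Field Fqm] (c : Fin n → Fqm) : ℕ :=
  wtR q m (Submodule.span Fqm ({c} : Set (Fin n → Fqm)))

/-- Hamming weight of a subspace: the number of coordinates where some element is nonzero. -/
noncomputable def wtH {Fqm : Type} [Field Fqm] (D : Submodule Fqm (Fin n → Fqm)) : ℕ :=
  {i : Fin n | ∃ d ∈ D, d i ≠ 0}.ncard

/-- `r`-th generalized rank weight of a linear code. -/
noncomputable def dR (q m : ℕ) {Fqm : Type} [Field Fqm]
    (C : Submodule Fqm (Fin n → Fqm)) (r : ℕ) : ℕ :=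
  sInf { dv | ∃ V : Submodule Fqm (Fin n → Fqm),
    GaloisClosed q m V ∧ r ≤ finrank Fqm ↥(C ⊓ V) ∧ dv = finrank Fqm ↥V }

/-- `r`-th generalized Hamming weight of a linear code. -/
noncomputable def dH {Fqm : Type} [Field Fqm]
    (C : Submodule Fqm (Fin n → Fqm)) (r : ℕ) : ℕ :=
  sInf { w | ∃ D : Submodule Fqm (Fin n → Fqm), D ≤ C ∧ finrank Fqm ↥D = r ∧ w = wtH D }

/-- `r`-th relative generalized rank weight of a nested code pair. -/
noncomputable def MR (q m : ℕ) {Fqm : Type} [Field Fqm]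
    (C₁ C₂ : Submodule Fqm (Fin n → Fqm)) (r : ℕ) : ℕ :=
  sInf { dv | ∃ V : Submodule Fqm (Fin n → Fqm), GaloisClosed q m V ∧
    r ≤ finrank Fqm ↥(C₁ ⊓ V) - finrank Fqm ↥(C₂ ⊓ V) ∧ dv = finrank Fqm ↥V }

/-- Minimum rank distance of an arbitrary (possibly nonlinear) code. -/
noncomputable def dRset (q m : ℕ) {Fqm : Type} [Field Fqm] (C : Set (Fin n → Fqm)) : ℕ :=
  sInf { w | ∃ c₁ ∈ C, ∃ c₂ ∈ C, c₁ ≠ c₂ ∧ w = wtRv q m (c₁ - c₂) }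

/-- The linear functional `x ↦ Σ_j x_j y_j` (dot product with `y`). -/
def dotLin {K : Type} [Field K] (y : Fin n → K) : (Fin n → K) →ₗ[K] K :=
  ∑ j, y j • LinearMap.proj j

/-- Orthogonal complement of a subspace with respect to the standard bilinear form. -/
def perp {K : Type} [Field K] (L : Submodule K (Fin n → K)) : Submodule K (Fin n → K) :=
  ⨅ y ∈ L, LinearMap.ker (dotLin y)

/-- The coordinatewise inclusion `Fq^n → Fqm^n`. -/
def embFq (Fq Fqm : Type) [Field Fq] [Field Fqm] [Algebra Fq Fqm] :
    (Fin n → Fq) →ₗ[Fq] (Fin n → Fqm) :=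
  LinearMap.pi fun j => (Algebra.linearMap Fq Fqm).comp (LinearMap.proj j)

/-- `V_L = L ⊗ Fqm`, the `Fqm`-span of `L ⊆ Fq^n` inside `Fqm^n`. -/
def VL {Fq : Type} (Fqm : Type) [Field Fq] [Field Fqm] [Algebra Fq Fqm]
    (L : Submodule Fq (Fin n → Fq)) : Submodule Fqm (Fin n → Fqm) :=
  Submodule.span Fqm (embFq Fq Fqm '' (L : Set (Fin n → Fq)))

/-- Rank-punctured code `C^L`: the image of `C` in `Fqm^n / V_{L^⊥}`. -/
noncomputable def punct {Fq Fqm : Type} [Field Fq] [Field Fqm] [Algebra Fq Fqm]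
    (L : Submodule Fq (Fin n → Fq)) (C : Submodule Fqm (Fin n → Fqm)) :
    Submodule Fqm ((Fin n → Fqm) ⧸ VL Fqm (perp L)) :=
  Submodule.map (VL Fqm (perp L)).mkQ C

/-!
Expanding the coordinates of `v ∈ Fqm^n` in an `Fq`-basis of `Fqm` gives a matrix over `Fq`, and its
row space in `Fq^n` is the rank support of `v`. Since every `Fq`-linear functional on `Fqm` has the
form `x ↦ Tr (a x) = Σ_i (a x)^{q^i}`, the Galois closure of `span {v}` is the extension of scalars
of the rank support, so `wt_R(v)` is the dimension of the support. A transfer matrix `A` maps the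
support of `v` onto the support of `A v`.

(i) `A` lowers the dimension of the support of `c - c'` by at most `dim ker A ≤ ρ`, while
`A (c - c') = e' - e` has rank weight at most `2t`.
(ii) If `wt_R(c - c') ≤ 2t + ρ`, choose `A` whose `ρ`-dimensional kernel is contained in, or
contains, the support of `c - c'`. Then `A (c - c')` has rank weight at most `2t`, and splitting its
support splits it into two errors of rank weight at most `t`.
-/

section LinearAlgebra

variable {K V V' : Type*} [Field K] [AddCommGroup V] [Module K V]
  [AddCommGroup V'] [Module K V']

lemma finrank_map_add_finrank_inf_ker (f : V →ₗ[K] V') (W : Submodule K V)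
    [FiniteDimensional K W] :
    finrank K (W.map f) + finrank K ↥(W ⊓ LinearMap.ker f) = finrank K W := by
  rw [← (f.domRestrict W).finrank_range_add_finrank_ker, LinearMap.range_domRestrict,
    LinearMap.ker_domRestrict, ← map_comap_subtype, finrank_map_subtype_eq]

lemma exists_finrank_eq_of_le_of_le [FiniteDimensional K V] {W₁ W₂ : Submodule K V} (h : W₁ ≤ W₂)
    {d : ℕ} (hd₁ : finrank K W₁ ≤ d) (hd₂ : d ≤ finrank K W₂) :
    ∃ U, W₁ ≤ U ∧ U ≤ W₂ ∧ finrank K U = d := by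
  induction d, hd₁ using Nat.le_induction with
  | base => exact ⟨W₁, le_rfl, h, rfl⟩
  | succ d _ ih =>
    obtain ⟨U, hW₁U, hUW₂, hU⟩ := ih (Nat.le_of_succ_le hd₂)
    have hlt : U < W₂ := lt_of_le_of_finrank_lt_finrank hUW₂ (by omega)
    obtain ⟨x, hxW₂, hxU⟩ := SetLike.exists_of_lt hlt
    refine ⟨U ⊔ span K {x}, le_sup_of_le_left hW₁U, ?_, ?_⟩
    · exact sup_le hUW₂ ((span_singleton_le_iff_mem _ _).2 hxW₂)
    · rw [finrank_sup_span_singleton hxU, hU]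

lemma exists_finrank_eq_and_le_or_le [FiniteDimensional K V] (W : Submodule K V) {d : ℕ}
    (hd : d ≤ finrank K V) : ∃ U : Submodule K V, finrank K U = d ∧ (U ≤ W ∨ W ≤ U) := by
  rcases le_total d (finrank K W) with hdW | hWd
  · obtain ⟨U, -, hUW, hU⟩ := exists_finrank_eq_of_le_of_le (bot_le (a := W)) (by simp) hdW
    exact ⟨U, hU, .inl hUW⟩
  · obtain ⟨U, hWU, -, hU⟩ := exists_finrank_eq_of_le_of_le (le_top (a := W)) hWd (by simpa)
    exact ⟨U, hU, .inr hWU⟩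

lemma exists_matrix_ker_mulVecLin_eq {ι : Type*} [Fintype ι] (U : Submodule K (ι → K)) :
    ∃ A : Matrix ι ι K, LinearMap.ker A.mulVecLin = U := by
  classical
  obtain ⟨W, hUW⟩ := U.exists_isCompl
  refine ⟨LinearMap.toMatrix' (W.projection U hUW.symm), ?_⟩
  rw [← Matrix.toLin'_apply', Matrix.toLin'_toMatrix', ker_projection]

lemma rank_add_finrank_ker_mulVecLin {ι κ : Type*} [Fintype ι] (A : Matrix κ ι K) :
    A.rank + finrank K (LinearMap.ker A.mulVecLin) = Fintype.card ι := by
  rw [Matrix.rank, LinearMap.finrank_range_add_finrank_ker, finrank_fintype_fun_eq_card]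

end LinearAlgebra

section RankSupport

variable {ι κ : Type*} (K : Type*) {E : Type*} [Field K] [AddCommGroup E] [Module K E]

/-- The rank support of a vector `v` with coordinates in a `K`-vector space `E`: the row space over
`K` of the matrix whose columns are the coordinates of `v` expanded in a basis of `E`. To avoid
choosing a basis, it is encoded as the set of all `φ ∘ v` with `φ` a linear functional on `E`. -/
def rankSupport (v : ι → E) : Submodule K (ι → K) :=
  LinearMap.range (LinearMap.pi fun i => Dual.eval K E (v i))

variable {K}

lemma comp_mem_rankSupport (φ : Dual K E) (v : ι → E) : φ ∘ v ∈ rankSupport K v :=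
  ⟨φ, rfl⟩

lemma rankSupport_sub_le (v w : ι → E) :
    rankSupport K (v - w) ≤ rankSupport K v ⊔ rankSupport K w := by
  rintro _ ⟨φ, rfl⟩
  have hsub : φ ∘ (v - w) = φ ∘ v - φ ∘ w := by ext; simp
  change φ ∘ (v - w) ∈ _
  rw [hsub]
  exact sub_mem (mem_sup_left (comp_mem_rankSupport φ v))
    (mem_sup_right (comp_mem_rankSupport φ w))

lemma rankSupport_neg (v : ι → E) : rankSupport K (-v) = rankSupport K v := by
  rw [rankSupport, rankSupport, ← LinearMap.range_neg]
  congr 1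
  ext φ i
  simp

lemma finrank_rankSupport_sub_le [Finite ι] (v w : ι → E) :
    finrank K (rankSupport K (v - w)) ≤
      finrank K (rankSupport K v) + finrank K (rankSupport K w) :=
  (finrank_mono (rankSupport_sub_le v w)).trans (finrank_add_le_finrank_add_finrank _ _)

variable {L : Type*} [CommRing L] [Algebra K L]

lemma rankSupport_mulVec [Fintype ι] (A : Matrix κ ι K) (v : ι → L) :
    rankSupport K ((A.map (algebraMap K L)).mulVec v) = (rankSupport K v).map A.mulVecLin := by
  rw [rankSupport, rankSupport, ← LinearMap.range_comp]
  congr 1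
  ext φ k
  simp [Matrix.mulVec, dotProduct, ← Algebra.smul_def]

lemma finrank_rankSupport_add_rank_le [Fintype ι] (A : Matrix κ ι K) (v : ι → L) :
    finrank K (rankSupport K v) + A.rank ≤
      finrank K (rankSupport K ((A.map (algebraMap K L)).mulVec v)) + Fintype.card ι := by
  have hmap := finrank_map_add_finrank_inf_ker A.mulVecLin (rankSupport K v)
  have hinf : finrank K ↥(rankSupport K v ⊓ LinearMap.ker A.mulVecLin) ≤
      finrank K (LinearMap.ker A.mulVecLin) := finrank_mono inf_le_right
  have hrank := rank_add_finrank_ker_mulVecLin A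
  rw [rankSupport_mulVec]
  omega

lemma exists_rank_eq_and_finrank_rankSupport_mulVec_eq [Fintype ι] (v : ι → L)
    {r : ℕ} (hr : r ≤ Fintype.card ι) :
    ∃ A : Matrix ι ι K, A.rank = Fintype.card ι - r ∧
      finrank K (rankSupport K ((A.map (algebraMap K L)).mulVec v)) =
        finrank K (rankSupport K v) - r := by
  obtain ⟨U, hU, hcomparable⟩ := exists_finrank_eq_and_le_or_le (rankSupport K v)
    (hr.trans_eq (finrank_fintype_fun_eq_card K).symm)
  obtain ⟨A, hker⟩ := exists_matrix_ker_mulVecLin_eq U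
  have hrank := rank_add_finrank_ker_mulVecLin A
  have hmap := finrank_map_add_finrank_inf_ker A.mulVecLin (rankSupport K v)
  rw [← rankSupport_mulVec] at hmap
  rw [hker] at hrank hmap
  refine ⟨A, by omega, ?_⟩
  rcases hcomparable with hUv | hvU
  · rw [inf_eq_right.2 hUv] at hmap
    omega
  · have := finrank_mono hvU
    rw [inf_eq_left.2 hvU] at hmap
    omega

lemma exists_add_eq_of_finrank_rankSupport_le [Finite ι] (v : ι → L) {s t : ℕ}
    (hv : finrank K (rankSupport K v) ≤ s + t) :
    ∃ u w : ι → L, u + w = v ∧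
      finrank K (rankSupport K u) ≤ s ∧ finrank K (rankSupport K w) ≤ t := by
  classical
  have := Fintype.ofFinite ι
  obtain ⟨U, -, hUv, hU⟩ := exists_finrank_eq_of_le_of_le (bot_le (a := rankSupport K v))
    (d := min s (finrank K (rankSupport K v))) (by simp) (min_le_right _ _)
  obtain ⟨W, hUW⟩ := U.exists_isCompl
  let P := LinearMap.toMatrix' (U.projection W hUW)
  let Q := LinearMap.toMatrix' (W.projection U hUW.symm)
  have hP : P.mulVecLin = U.projection W hUW := Matrix.toLin'_toMatrix' _
  have hQ : Q.mulVecLin = W.projection U hUW.symm := Matrix.toLin'_toMatrix' _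
  have hPQ : P + Q = 1 := by
    rw [← map_add, projection_add_projection_eq_id, LinearMap.toMatrix'_id]
  refine ⟨(P.map (algebraMap K L)).mulVec v, (Q.map (algebraMap K L)).mulVec v, ?_, ?_, ?_⟩
  · rw [← Matrix.add_mulVec, ← Matrix.map_add _ (map_add _), hPQ,
      Matrix.map_one _ (map_zero _) (map_one _), Matrix.one_mulVec]
  · have hle : (rankSupport K v).map P.mulVecLin ≤ U := by
      rw [hP]
      exact LinearMap.map_le_range.trans (range_projection hUW).le
    rw [rankSupport_mulVec]
    exact (finrank_mono hle).trans (hU.trans_le (min_le_left _ _))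
  · have hmap := finrank_map_add_finrank_inf_ker Q.mulVecLin (rankSupport K v)
    rw [hQ, ker_projection, inf_eq_right.2 hUv, hU, ← hQ] at hmap
    rw [rankSupport_mulVec]
    omega

lemma finrank_rankSupport_sub_add_rank_le [Fintype ι] [Finite κ] (A : Matrix κ ι K)
    {c c' : ι → L} {e e' : κ → L}
    (h : (A.map (algebraMap K L)).mulVec c + e = (A.map (algebraMap K L)).mulVec c' + e') :
    finrank K (rankSupport K (c - c')) + A.rank ≤
      finrank K (rankSupport K e) + finrank K (rankSupport K e') + Fintype.card ι := by
  have hdiff : (A.map (algebraMap K L)).mulVec (c - c') = e' - e := by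
    rw [Matrix.mulVec_sub, sub_eq_sub_iff_add_eq_add, h, add_comm]
  have herasures := finrank_rankSupport_add_rank_le A (c - c')
  have herrors := finrank_rankSupport_sub_le (K := K) e' e
  rw [hdiff] at herasures
  omega

lemma exists_mulVec_add_eq_mulVec_add [Fintype ι] (c c' : ι → L) {r s t : ℕ}
    (hr : r ≤ Fintype.card ι) (h : finrank K (rankSupport K (c - c')) ≤ s + t + r) :
    ∃ A : Matrix ι ι K, A.rank = Fintype.card ι - r ∧ ∃ e e' : ι → L,
      finrank K (rankSupport K e) ≤ s ∧ finrank K (rankSupport K e') ≤ t ∧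
      (A.map (algebraMap K L)).mulVec c + e = (A.map (algebraMap K L)).mulVec c' + e' := by
  obtain ⟨A, hrank, hA⟩ := exists_rank_eq_and_finrank_rankSupport_mulVec_eq (K := K) (c - c') hr
  obtain ⟨u, w, huw, hu, hw⟩ := exists_add_eq_of_finrank_rankSupport_le (K := K) (s := s) (t := t)
    ((A.map (algebraMap K L)).mulVec (c - c')) (by omega)
  refine ⟨A, hrank, -u, w, by rwa [rankSupport_neg], hw, ?_⟩
  rw [Matrix.mulVec_sub] at huw
  rw [add_neg_eq_iff_eq_add, add_assoc, add_comm w, huw, add_sub_cancel]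

end RankSupport

section FieldExtension

variable (K L : Type*) [Field K] [Field L] [Algebra K L]

lemma exists_algHom_eq_pow_card_pow [Finite L] (i : ℕ) :
    ∃ σ : L →ₐ[K] L, ∀ x, σ x = x ^ Nat.card K ^ i := by
  have := Finite.of_injective _ (FaithfulSMul.algebraMap_injective K L)
  have := Fintype.ofFinite K
  refine ⟨FiniteField.frobeniusAlgHom K L ^ i, fun x => ?_⟩
  rw [AlgHom.coe_pow, FiniteField.coe_frobeniusAlgHom, pow_iterate, Fintype.card_eq_nat_card]

variable {K L} in
lemma exists_trace_mul_eq [FiniteDimensional K L] [Algebra.IsSeparable K L] (φ : Dual K L) :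
    ∃ a, ∀ x, Algebra.trace K L (a * x) = φ x := by
  obtain ⟨a, rfl⟩ := (LinearMap.BilinForm.toDual _ (traceForm_nondegenerate K L)).surjective φ
  exact ⟨a, fun _ => rfl⟩

end FieldExtension

section GaloisClosure

variable {Fq Fqm : Type} [Field Fq] [Field Fqm] [Algebra Fq Fqm]

lemma embFq_eq_comp (x : Fin n → Fq) : embFq Fq Fqm x = algebraMap Fq Fqm ∘ x :=
  rfl

lemma VL_span (s : Set (Fin n → Fq)) : VL Fqm (span Fq s) = span Fqm (embFq Fq Fqm '' s) := by
  rw [VL, ← map_coe, map_span, span_span_of_tower]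

lemma finrank_VL (W : Submodule Fq (Fin n → Fq)) : finrank Fqm (VL Fqm W) = finrank Fq W := by
  obtain ⟨w, hli, hspan⟩ : ∃ w : Fin (finrank Fq W) → Fin n → Fq,
      LinearIndependent Fq w ∧ span Fq (Set.range w) = W := by
    let b := finBasis Fq W
    refine ⟨W.subtype ∘ b, b.linearIndependent.map' W.subtype W.ker_subtype, ?_⟩
    rw [Set.range_comp, ← map_span, b.span_eq, map_subtype_top]
  have hli' : LinearIndependent Fqm (embFq Fq Fqm ∘ w) :=
    linearIndependent_algebraMap_comp_iff.2 hli
  conv_lhs => rw [← hspan, VL_span, ← Set.range_comp]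
  rw [finrank_span_eq_card hli', Fintype.card_fin]

lemma linearMap_comp_mem_VL {E : Type*} [AddCommGroup E] [Module Fq E] [FiniteDimensional Fq E]
    (f : E →ₗ[Fq] Fqm) (v : Fin n → E) : f ∘ v ∈ VL Fqm (rankSupport Fq v) := by
  let b := finBasis Fq E
  have hexpand : f ∘ v = ∑ k, f (b k) • embFq Fq Fqm (b.coord k ∘ v) := by
    ext j
    conv_lhs => rw [Function.comp_apply, ← b.sum_repr (v j), map_sum]
    simp [embFq_eq_comp, Algebra.smul_def, mul_comm]
  rw [hexpand]
  exact sum_mem fun k _ => smul_mem _ _ (subset_span ⟨_, comp_mem_rankSupport _ v, rfl⟩)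

variable [Finite Fqm]

lemma galClosure_span_singleton_le (m : ℕ) (c : Fin n → Fqm) :
    galClosure (Nat.card Fq) m (span Fqm {c}) ≤ VL Fqm (rankSupport Fq c) := by
  refine span_le.2 (Set.iUnion₂_subset ?_)
  rintro i - _ ⟨v, hv, rfl⟩
  obtain ⟨a, rfl⟩ := mem_span_singleton.1 hv
  obtain ⟨σ, hσ⟩ := exists_algHom_eq_pow_card_pow Fq Fqm i
  have hpow : qpowMap (Nat.card Fq) i (a • c) =
      (σ.toLinearMap ∘ₗ LinearMap.mulLeft Fq a) ∘ c := by
    ext j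
    simp [qpowMap, hσ, mul_pow]
  rw [hpow]
  exact linearMap_comp_mem_VL _ c

lemma VL_rankSupport_le (c : Fin n → Fqm) :
    VL Fqm (rankSupport Fq c) ≤ galClosure (Nat.card Fq) (finrank Fq Fqm) (span Fqm {c}) := by
  have := Finite.of_injective _ (FaithfulSMul.algebraMap_injective Fq Fqm)
  refine span_le.2 ?_
  rintro _ ⟨_, ⟨φ, rfl⟩, rfl⟩
  obtain ⟨a, ha⟩ := exists_trace_mul_eq φ
  have htrace : embFq Fq Fqm (φ ∘ c) =
      ∑ i ∈ Finset.range (finrank Fq Fqm), qpowMap (Nat.card Fq) i (a • c) := by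
    ext j
    simp [embFq_eq_comp, ← ha, FiniteField.algebraMap_trace_eq_sum_pow, qpowMap]
  refine htrace ▸ sum_mem fun i hi => subset_span (Set.mem_biUnion hi ?_)
  exact ⟨a • c, smul_mem _ _ (mem_span_singleton_self c), rfl⟩

lemma wtRv_eq_finrank_rankSupport (c : Fin n → Fqm) :
    wtRv (Nat.card Fq) (finrank Fq Fqm) c = finrank Fq (rankSupport Fq c) := by
  rw [wtRv, wtR, (galClosure_span_singleton_le _ c).antisymm (VL_rankSupport_le c), finrank_VL]

end GaloisClosure

section MinimumDistance

variable {Fqm : Type} [Field Fqm] {C : Set (Fin n → Fqm)}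

lemma dRset_le (q m : ℕ) {c c' : Fin n → Fqm} (hc : c ∈ C) (hc' : c' ∈ C) (hne : c ≠ c') :
    dRset q m C ≤ wtRv q m (c - c') :=
  Nat.sInf_le ⟨c, hc, c', hc', hne, rfl⟩

lemma exists_wtRv_sub_eq_dRset (q m : ℕ) (hC : C.Nontrivial) :
    ∃ c ∈ C, ∃ c' ∈ C, c ≠ c' ∧ wtRv q m (c - c') = dRset q m C := by
  obtain ⟨a, ha, b, hb, hab⟩ := hC
  obtain ⟨c, hc, c', hc', hne, heq⟩ := Nat.sInf_mem
    (s := {w | ∃ c₁ ∈ C, ∃ c₂ ∈ C, c₁ ≠ c₂ ∧ w = wtRv q m (c₁ - c₂)}) ⟨_, a, ha, b, hb, hab, rfl⟩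
  exact ⟨c, hc, c', hc', hne, heq.symm⟩

end MinimumDistance

/-- correction of `t` errors and `ρ` erasures. (i) If `d_R(C) > 2t + ρ`,
the decoder is infallible for every transfer matrix of rank at least `n − ρ`;
(ii) otherwise some transfer matrix of rank `n − ρ` admits a decoding ambiguity. -/
theorem stmt19 (q m n t ρ : ℕ) (Fq Fqm : Type) [Field Fq] [Field Fqm] [Algebra Fq Fqm]
    [Finite Fqm] (hq : Nat.card Fq = q) (hm : finrank Fq Fqm = m)
    (C : Set (Fin n → Fqm)) (hC : C.Nontrivial) :
    (2 * t + ρ < dRset q m C →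
      ∀ N : ℕ, 0 < N → ∀ A : Matrix (Fin N) (Fin n) Fq, n - ρ ≤ A.rank →
        ∀ c ∈ C, ∀ c' ∈ C, ∀ e e' : Fin N → Fqm,
          wtRv q m e ≤ t → wtRv q m e' ≤ t →
          (A.map (algebraMap Fq Fqm)).mulVec c + e
            = (A.map (algebraMap Fq Fqm)).mulVec c' + e' →
          c = c') ∧
    (dRset q m C ≤ 2 * t + ρ → ρ ≤ n →
      ∃ (N : ℕ) (A : Matrix (Fin N) (Fin n) Fq), 0 < N ∧ A.rank = n - ρ ∧
        ∃ c ∈ C, ∃ c' ∈ C, c ≠ c' ∧ ∃ e e' : Fin N → Fqm,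
          wtRv q m e ≤ t ∧ wtRv q m e' ≤ t ∧
          (A.map (algebraMap Fq Fqm)).mulVec c + e
            = (A.map (algebraMap Fq Fqm)).mulVec c' + e') := by
  subst hq hm
  simp only [wtRv_eq_finrank_rankSupport]
  constructor
  · intro hd N _ A hA c hc c' hc' e e' he he' heq
    by_contra hne
    have hdist := dRset_le (Nat.card Fq) (finrank Fq Fqm) hc hc' hne
    have hrank := finrank_rankSupport_sub_add_rank_le A heq
    rw [wtRv_eq_finrank_rankSupport] at hdist
    rw [Fintype.card_fin] at hrank
    omega
  · intro hd hρ
    obtain ⟨c, hc, c', hc', hne, hdist⟩ :=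
      exists_wtRv_sub_eq_dRset (Nat.card Fq) (finrank Fq Fqm) hC
    rw [← hdist, wtRv_eq_finrank_rankSupport, two_mul] at hd
    rw [← Fintype.card_fin n] at hρ
    obtain ⟨A, hrank, hA⟩ := exists_mulVec_add_eq_mulVec_add c c' hρ hd
    obtain ⟨i, -⟩ := Function.ne_iff.1 hne
    exact ⟨n, A, i.pos, by rwa [Fintype.card_fin] at hrank, c, hc, c', hc', hne, hA⟩

end RankPaper
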